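/- arXiv:1504.03026 — 2 statements merged into one kernel-verified Lean document; each statement's English description precedes it below -/
import Mathlib

section
/- Applying a lowering operation at any vertex cannot increase the raising imbalance ρ_u^R of any vertex u; symmetrically, applying a raising operation at any vertex cannot increase the lowering imbalance ρ_u^L of any vertex u. -/
open Filter Topology

variable {V : Type*}

/-- Maximum weight of an edge leaving `v` (as a supremum over the finite edge set). -/
noncomputable def outMax (E : V → V → Prop) (α : V → V → ℝ) (v : V) : ℝ :=
  sSup {x : ℝ | ∃ w, E v w ∧ x = α v w}

/-- Maximum weight of an edge entering `v`. -/
noncomputable def inMax (E : V → V → Prop) (α : V → V → ℝ) (v : V) : ℝ :=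
  sSup {x : ℝ | ∃ u, E u v ∧ x = α u v}

/-- A graph function is balanced if the max outgoing weight equals the max incoming
weight at every vertex. -/
def IsBalancedGF (E : V → V → Prop) (α : V → V → ℝ) : Prop :=
  ∀ v, outMax E α v = inMax E α v

/-- Raising imbalance at `v`. -/
noncomputable def rhoR (E : V → V → Prop) (α : V → V → ℝ) (v : V) : ℝ :=
  max 0 (outMax E α v - inMax E α v)

/-- Lowering imbalance at `v`. -/
noncomputable def rhoL (E : V → V → Prop) (α : V → V → ℝ) (v : V) : ℝ :=
  max 0 (inMax E α v - outMax E α v)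

/-- A balancing operation at `v`: add `(α_v^out − α_v^in)/2` to every edge entering `v`
and subtract the same quantity from every edge leaving `v` (a self-loop is unchanged). -/
noncomputable def balanceAt [DecidableEq V] (E : V → V → Prop) (α : V → V → ℝ) (v : V) :
    V → V → ℝ :=
  fun a b =>
    α a b + (if b = v then (outMax E α v - inMax E α v) / 2 else 0)
          - (if a = v then (outMax E α v - inMax E α v) / 2 else 0)

/-- A raising operation at `v`: balance at `v` if the raising imbalance is positive,
otherwise do nothing. -/
noncomputable def raiseOp [DecidableEq V] (E : V → V → Prop) (α : V → V → ℝ) (v : V) :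
    V → V → ℝ :=
  if 0 < rhoR E α v then balanceAt E α v else α

/-- A lowering operation at `v`: balance at `v` if the lowering imbalance is positive,
otherwise do nothing. -/
noncomputable def lowerOp [DecidableEq V] (E : V → V → Prop) (α : V → V → ℝ) (v : V) :
    V → V → ℝ :=
  if 0 < rhoL E α v then balanceAt E α v else α

/-- A sequence of vertices is fair if every vertex appears infinitely often. -/
def Fair (σ : ℕ → V) : Prop := ∀ (v : V) (N : ℕ), ∃ t, N ≤ t ∧ σ t = v

/-- State after `t` raising operations along the sequence `σ`. -/
noncomputable def raiseIter [DecidableEq V] (E : V → V → Prop) (α : V → V → ℝ)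
    (σ : ℕ → V) : ℕ → V → V → ℝ
  | 0 => α
  | t + 1 => raiseOp E (raiseIter E α σ t) (σ t)

/-- State after `t` lowering operations along the sequence `σ`. -/
noncomputable def lowerIter [DecidableEq V] (E : V → V → Prop) (α : V → V → ℝ)
    (σ : ℕ → V) : ℕ → V → V → ℝ
  | 0 => α
  | t + 1 => lowerOp E (lowerIter E α σ t) (σ t)

/-- The raising vector: cumulative amount by which each vertex has been raised after
`t` raising operations along `σ`. -/
noncomputable def rvec [DecidableEq V] (E : V → V → Prop) (α : V → V → ℝ)
    (σ : ℕ → V) : ℕ → V → ℝ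
  | 0 => fun _ => 0
  | t + 1 => fun u =>
      rvec E α σ t u + (if u = σ t then rhoR E (raiseIter E α σ t) (σ t) / 2 else 0)

/-- State after performing raising operations along a finite list of vertices. -/
noncomputable def raiseList [DecidableEq V] (E : V → V → Prop) :
    (V → V → ℝ) → List V → V → V → ℝ
  | α, [] => α
  | α, v :: l => raiseList E (raiseOp E α v) l

/-- Raising vector accumulated along a finite list of raising operations. -/
noncomputable def rvecList [DecidableEq V] (E : V → V → Prop) :
    (V → V → ℝ) → List V → V → ℝ
  | _, [] => fun _ => 0
  | α, v :: l => fun u =>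
      (if u = v then rhoR E α v / 2 else 0) + rvecList E (raiseOp E α v) l u

/-- State after performing (unconditional) balancing operations along a list. -/
noncomputable def balList [DecidableEq V] (E : V → V → Prop) :
    (V → V → ℝ) → List V → V → V → ℝ
  | α, [] => α
  | α, v :: l => balList E (balanceAt E α v) l

/-- State after `t` balancing operations along the sequence `σ`. -/
noncomputable def balIter [DecidableEq V] (E : V → V → Prop) (α : V → V → ℝ)
    (σ : ℕ → V) : ℕ → V → V → ℝ
  | 0 => α
  | t + 1 => balanceAt E (balIter E α σ t) (σ t)

/-- Two graph functions are equivalent if their sums around every directed cycle agree. -/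
def Equivalent (E : V → V → Prop) (α γ : V → V → ℝ) : Prop :=
  ∀ (k : ℕ) (f : ZMod (k + 1) → V), (∀ i, E (f i) (f (i + 1))) →
    (∑ i, α (f i) (f (i + 1))) = ∑ i, γ (f i) (f (i + 1))

/-- The raising-balanced graph function determined by the limiting raising vector. -/
noncomputable def alphaR (α : V → V → ℝ) (rstar : V → ℝ) : V → V → ℝ :=
  fun u v => α u v + rstar v - rstar u

/-- Height of a vertex: `y_v = -r*_v`. -/
noncomputable def height (rstar : V → ℝ) (v : V) : ℝ := -rstar v

/-- Level of a vertex: maximum over incoming edges of `α^R`. -/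
noncomputable def level (E : V → V → Prop) (α : V → V → ℝ) (rstar : V → ℝ) (v : V) : ℝ :=
  inMax E (alphaR α rstar) v

/-- Momentum of a vertex: `m_v = max over edges (u,v) entering v of (α_{uv} − x_v)`. -/
noncomputable def momentum (E : V → V → Prop) (α : V → V → ℝ) (rstar : V → ℝ) (v : V) : ℝ :=
  sSup {c : ℝ | ∃ u, E u v ∧ c = α u v - level E α rstar v}

/-!
A lowering operation at `v` adds `rhoL E α v / 2` to the edges leaving `v` and subtracts it from the
edges entering `v`. At `u ≠ v` the outgoing weights can only decrease and the incoming weights can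
only increase, so the raising imbalance cannot grow. At `v` itself the difference of the two maxima
grows by at most `rhoL E α v`, and `outMax - inMax + rhoL = rhoR`. Reversing all edges exchanges
raising and lowering, which gives the second half.
-/

section Weights

variable {E : V → V → Prop} {α β : V → V → ℝ} {v : V} {c : ℝ}

/-- The set of weights of edges leaving `v`; its supremum is `outMax E α v`. -/
def outWeights (E : V → V → Prop) (α : V → V → ℝ) (v : V) : Set ℝ :=
  {x : ℝ | ∃ w, E v w ∧ x = α v w}

/-- The set of weights of edges entering `v`; its supremum is `inMax E α v`. -/
def inWeights (E : V → V → Prop) (α : V → V → ℝ) (v : V) : Set ℝ :=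
  {x : ℝ | ∃ u, E u v ∧ x = α u v}

theorem finite_outWeights [Finite V] (E : V → V → Prop) (α : V → V → ℝ) (v : V) :
    (outWeights E α v).Finite :=
  (Set.finite_range (α v)).subset fun _ ⟨w, _, hx⟩ ↦ ⟨w, hx.symm⟩

theorem finite_inWeights [Finite V] (E : V → V → Prop) (α : V → V → ℝ) (v : V) :
    (inWeights E α v).Finite :=
  finite_outWeights (flip E) (flip α) v

theorem bddAbove_outWeights_of_le_add (hα : BddAbove (outWeights E α v))
    (h : ∀ w, E v w → β v w ≤ α v w + c) : BddAbove (outWeights E β v) := by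
  obtain ⟨M, hM⟩ := hα
  refine ⟨M + c, ?_⟩
  rintro _ ⟨w, hw, rfl⟩
  exact (h w hw).trans (add_le_add_left (hM ⟨w, hw, rfl⟩) c)

theorem bddAbove_inWeights_of_le_add (hα : BddAbove (inWeights E α v))
    (h : ∀ u, E u v → β u v ≤ α u v + c) : BddAbove (inWeights E β v) :=
  bddAbove_outWeights_of_le_add (E := flip E) (α := flip α) (β := flip β) hα h

theorem outMax_le_outMax_add (hv : ∃ w, E v w) (hα : BddAbove (outWeights E α v))
    (h : ∀ w, E v w → β v w ≤ α v w + c) : outMax E β v ≤ outMax E α v + c := by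
  obtain ⟨w₀, hw₀⟩ := hv
  refine csSup_le ⟨_, w₀, hw₀, rfl⟩ ?_
  rintro _ ⟨w, hw, rfl⟩
  exact (h w hw).trans (add_le_add_left (le_csSup hα ⟨w, hw, rfl⟩) c)

theorem inMax_le_inMax_add (hv : ∃ u, E u v) (hα : BddAbove (inWeights E α v))
    (h : ∀ u, E u v → β u v ≤ α u v + c) : inMax E β v ≤ inMax E α v + c :=
  outMax_le_outMax_add (E := flip E) (α := flip α) (β := flip β) hv hα h

end Weights

section Imbalance

variable (E : V → V → Prop) (α : V → V → ℝ) (v : V)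

theorem rhoR_nonneg : 0 ≤ rhoR E α v :=
  le_max_left _ _

theorem rhoL_nonneg : 0 ≤ rhoL E α v :=
  le_max_left _ _

theorem outMax_sub_inMax_le_rhoR : outMax E α v - inMax E α v ≤ rhoR E α v :=
  le_max_right _ _

theorem outMax_sub_inMax_add_rhoL :
    outMax E α v - inMax E α v + rhoL E α v = rhoR E α v := by
  rw [rhoL, rhoR, add_max, add_zero, sub_add_sub_cancel, sub_self, max_comm]

theorem rhoR_flip : rhoR (flip E) (flip α) v = rhoL E α v :=
  rfl

theorem rhoL_flip : rhoL (flip E) (flip α) v = rhoR E α v :=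
  rfl

end Imbalance

section Operations

variable [DecidableEq V] (E : V → V → Prop) (α : V → V → ℝ) (v a b : V)

theorem balanceAt_flip : balanceAt (flip E) (flip α) v = flip (balanceAt E α v) := by
  have hflip : outMax (flip E) (flip α) v - inMax (flip E) (flip α) v =
      -(outMax E α v - inMax E α v) := (neg_sub _ _).symm
  ext a b
  simp only [balanceAt, flip, hflip, neg_div]
  split_ifs <;> ring

theorem lowerOp_flip : lowerOp (flip E) (flip α) v = flip (raiseOp E α v) := by
  rw [lowerOp, raiseOp, rhoL_flip, balanceAt_flip, apply_ite flip]

theorem lowerOp_apply :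
    lowerOp E α v a b = α a b + (if a = v then rhoL E α v / 2 else 0)
      - (if b = v then rhoL E α v / 2 else 0) := by
  by_cases hpos : 0 < rhoL E α v
  · have hrhoL : rhoL E α v = inMax E α v - outMax E α v :=
      max_eq_right ((lt_max_iff.mp hpos).resolve_left (lt_irrefl 0)).le
    rw [lowerOp, if_pos hpos, balanceAt, hrhoL]
    split_ifs <;> ring
  · have hzero : rhoL E α v = 0 := le_antisymm (not_lt.mp hpos) (rhoL_nonneg E α v)
    simp [lowerOp, hzero]

theorem lowerOp_le_add :
    lowerOp E α v a b ≤ α a b + if a = v then rhoL E α v / 2 else 0 := by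
  rw [lowerOp_apply]
  exact sub_le_self _ (ite_nonneg (div_nonneg (rhoL_nonneg E α v) zero_le_two) le_rfl)

theorem le_lowerOp_add :
    α a b ≤ lowerOp E α v a b + if b = v then rhoL E α v / 2 else 0 := by
  rw [lowerOp_apply, sub_add_cancel]
  exact le_add_of_nonneg_right (ite_nonneg (div_nonneg (rhoL_nonneg E α v) zero_le_two) le_rfl)

end Operations

section Noninterference

variable [DecidableEq V] {E : V → V → Prop} {α : V → V → ℝ} {u : V}

theorem bddAbove_inWeights_lowerOp (hα : BddAbove (inWeights E α u)) (v : V) :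
    BddAbove (inWeights E (lowerOp E α v) u) := by
  refine bddAbove_inWeights_of_le_add (c := rhoL E α v / 2) hα fun a _ ↦ ?_
  refine (lowerOp_le_add E α v a u).trans (add_le_add_right ?_ _)
  split_ifs
  exacts [le_rfl, div_nonneg (rhoL_nonneg E α v) zero_le_two]

theorem rhoR_lowerOp_le (hout : ∃ w, E u w) (hin : ∃ w, E w u)
    (hbddOut : BddAbove (outWeights E α u)) (hbddIn : BddAbove (inWeights E α u)) (v : V) :
    rhoR E (lowerOp E α v) u ≤ rhoR E α u := by
  have hmaxOut := outMax_le_outMax_add hout hbddOut fun w _ ↦ lowerOp_le_add E α v u w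
  have hmaxIn := inMax_le_inMax_add hin (bddAbove_inWeights_lowerOp hbddIn v)
    fun w _ ↦ le_lowerOp_add E α v w u
  refine max_le (rhoR_nonneg E α u) ?_
  obtain rfl | hne := eq_or_ne u v
  · rw [if_pos rfl] at hmaxOut hmaxIn
    linarith [outMax_sub_inMax_add_rhoL E α u]
  · rw [if_neg hne] at hmaxOut hmaxIn
    linarith [outMax_sub_inMax_le_rhoR E α u]

theorem rhoL_raiseOp_le (hout : ∃ w, E u w) (hin : ∃ w, E w u)
    (hbddOut : BddAbove (outWeights E α u)) (hbddIn : BddAbove (inWeights E α u)) (v : V) :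
    rhoL E (raiseOp E α v) u ≤ rhoL E α u := by
  rw [← rhoR_flip, ← rhoR_flip, ← lowerOp_flip]
  exact rhoR_lowerOp_le (E := flip E) (α := flip α) hin hout hbddIn hbddOut v

end Noninterference

theorem lowering_raising_noninterference_general [DecidableEq V] (E : V → V → Prop)
    (hout : ∀ v, ∃ w, E v w) (hin : ∀ v, ∃ u, E u v) (α : V → V → ℝ)
    (hbddOut : ∀ v, BddAbove (outWeights E α v)) (hbddIn : ∀ v, BddAbove (inWeights E α v))
    (v u : V) :
    rhoR E (lowerOp E α v) u ≤ rhoR E α u ∧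
    rhoL E (raiseOp E α v) u ≤ rhoL E α u :=
  ⟨rhoR_lowerOp_le (hout u) (hin u) (hbddOut u) (hbddIn u) v,
    rhoL_raiseOp_le (hout u) (hin u) (hbddOut u) (hbddIn u) v⟩

/-- A lowering operation cannot increase any raising imbalance, and
symmetrically a raising operation cannot increase any lowering imbalance. -/
theorem lowering_raising_noninterference
    [Fintype V] [Nonempty V] [DecidableEq V] (E : V → V → Prop)
    (hout : ∀ v, ∃ w, E v w) (hin : ∀ v, ∃ u, E u v)
    (hconn : ∀ u v : V, Relation.ReflTransGen E u v)
    (α : V → V → ℝ) (v u : V) :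
    rhoR E (lowerOp E α v) u ≤ rhoR E α u ∧
    rhoL E (raiseOp E α v) u ≤ rhoL E α u :=
  lowering_raising_noninterference_general E hout hin α
    (fun v ↦ (finite_outWeights E α v).bddAbove) (fun v ↦ (finite_inWeights E α v).bddAbove) v u
end

section
/- Let α be a graph function and v a vertex with ρ_v^R > 0. Then there exist an edge (u,v) of G entering v and an edge (v,w) of G leaving v such that y_v + ρ_v^R/2 ≤ (y_u + y_w)/2. -/
open Filter Topology

variable {V : Type*}

/-! Each raising operation changes the weights by a potential, so the state after `t` steps is
`alphaR α (r t)`, with `r t` the cumulative raising vector, and it converges to `α^R`. The step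
taken at a visit to `v` is half the raising imbalance at `v`. Since `r` converges, these steps tend
to `0`, hence `α^R` has no raising imbalance at `v`.

Let `(v, w)` be a heaviest edge leaving `v` for `α` and `(u, v)` a heaviest edge entering `v` for
`α^R`. Then `α^R_{vw} ≤ α^R_{uv}`, while `ρ_v^R ≤ α_{vw} - α_{uv}`; rewriting the first inequality
in terms of `α` and the heights bounds the right-hand side of the second by `y_u + y_w - 2 y_v`. -/

section MaxWeight

variable {E : V → V → Prop} {v : V}

lemma isGreatest_outMax (α : V → V → ℝ) (hfin : {w | E v w}.Finite) (hout : ∃ w, E v w) :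
    IsGreatest {x | ∃ w, E v w ∧ x = α v w} (outMax E α v) := by
  have hfinite : {x | ∃ w, E v w ∧ x = α v w}.Finite :=
    (hfin.image (α v)).subset fun _ ⟨w, hw, hx⟩ => ⟨w, hw, hx.symm⟩
  have hnonempty : {x | ∃ w, E v w ∧ x = α v w}.Nonempty :=
    hout.imp' (α v) fun w hw => ⟨w, hw, rfl⟩
  exact ⟨hnonempty.csSup_mem hfinite, fun _ hx => le_csSup hfinite.bddAbove hx⟩

lemma isGreatest_inMax (α : V → V → ℝ) (hfin : {u | E u v}.Finite) (hin : ∃ u, E u v) :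
    IsGreatest {x | ∃ u, E u v ∧ x = α u v} (inMax E α v) :=
  isGreatest_outMax (E := flip E) (flip α) hfin hin

lemma continuous_outMax (hfin : {w | E v w}.Finite) (hout : ∃ w, E v w) :
    Continuous fun α : V → V → ℝ => outMax E α v := by
  have hne : hfin.toFinset.Nonempty := hfin.toFinset_nonempty.2 hout
  have hsup (α : V → V → ℝ) : outMax E α v = hfin.toFinset.sup' hne (α v) := by
    rw [Finset.sup'_eq_csSup_image, hfin.coe_toFinset]
    simp only [outMax, Set.image, Set.mem_ofPred_eq, eq_comm]
  simp only [hsup]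
  exact Continuous.finset_sup'_apply hne fun w _ => continuous_apply_apply v w

lemma continuous_inMax (hfin : {u | E u v}.Finite) (hin : ∃ u, E u v) :
    Continuous fun α : V → V → ℝ => inMax E α v :=
  (continuous_outMax (E := flip E) hfin hin).comp <|
    continuous_pi fun a => continuous_pi fun b => continuous_apply_apply b a

lemma continuous_rhoR (hfinOut : {w | E v w}.Finite) (hfinIn : {u | E u v}.Finite)
    (hout : ∃ w, E v w) (hin : ∃ u, E u v) : Continuous fun α : V → V → ℝ => rhoR E α v :=
  continuous_const.max ((continuous_outMax hfinOut hout).sub (continuous_inMax hfinIn hin))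

lemma rhoR_eq_sub_of_pos {α : V → V → ℝ} (hv : 0 < rhoR E α v) :
    rhoR E α v = outMax E α v - inMax E α v :=
  max_eq_right ((lt_max_iff.1 hv).resolve_left (lt_irrefl 0)).le

end MaxWeight

section RaisingVector

lemma alphaR_zero (α : V → V → ℝ) : alphaR α 0 = α := by
  ext a b
  simp [alphaR]

lemma alphaR_alphaR (α : V → V → ℝ) (r s : V → ℝ) :
    alphaR (alphaR α r) s = alphaR α (r + s) := by
  ext a b
  simp only [alphaR, Pi.add_apply]
  ring

lemma continuous_alphaR (α : V → V → ℝ) : Continuous (alphaR α) := by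
  unfold alphaR
  fun_prop

variable [DecidableEq V] (E : V → V → Prop) (α : V → V → ℝ)

lemma raiseOp_eq_alphaR (v : V) :
    raiseOp E α v = alphaR α (Pi.single v (rhoR E α v / 2)) := by
  by_cases hv : 0 < rhoR E α v
  · ext a b
    rw [raiseOp, if_pos hv]
    simp only [balanceAt, alphaR, Pi.single_apply, rhoR_eq_sub_of_pos hv]
  · have hzero : rhoR E α v = 0 := le_antisymm (not_lt.1 hv) (le_max_left _ _)
    rw [raiseOp, if_neg hv, hzero, zero_div, Pi.single_zero, alphaR_zero]

lemma rvec_succ (σ : ℕ → V) (t : ℕ) :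
    rvec E α σ (t + 1) =
      rvec E α σ t + Pi.single (σ t) (rhoR E (raiseIter E α σ t) (σ t) / 2) := by
  ext u
  simp only [rvec, Pi.add_apply, Pi.single_apply]

lemma raiseIter_eq_alphaR (σ : ℕ → V) (t : ℕ) :
    raiseIter E α σ t = alphaR α (rvec E α σ t) := by
  induction t with
  | zero => exact (alphaR_zero α).symm
  | succ t ih => rw [rvec_succ, ← alphaR_alphaR, ← ih, ← raiseOp_eq_alphaR, raiseIter]

end RaisingVector

lemma exists_fair [Countable V] [Nonempty V] : ∃ σ : ℕ → V, Fair σ := by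
  obtain ⟨f, hf⟩ := exists_surjective_nat V
  refine ⟨fun t => f t.unpair.1, fun v N => ?_⟩
  obtain ⟨n, rfl⟩ := hf v
  exact ⟨Nat.pair n N, Nat.right_le_pair n N, by simp only [Nat.unpair_pair]⟩

section Limit

variable [DecidableEq V] {E : V → V → Prop} {α : V → V → ℝ} {σ : ℕ → V} {rstar : V → ℝ} {v : V}

lemma rhoR_alphaR_eq_zero_of_tendsto_rvec
    (hfinOut : {w | E v w}.Finite) (hfinIn : {u | E u v}.Finite)
    (hout : ∃ w, E v w) (hin : ∃ u, E u v)
    (hσ : ∃ᶠ t in atTop, σ t = v) (hr : Tendsto (rvec E α σ) atTop (𝓝 rstar)) :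
    rhoR E (alphaR α rstar) v = 0 := by
  have hstate : Tendsto (raiseIter E α σ) atTop (𝓝 (alphaR α rstar)) := by
    rw [funext (raiseIter_eq_alphaR E α σ)]
    exact ((continuous_alphaR α).tendsto rstar).comp hr
  have hrho : Tendsto (fun t => rhoR E (raiseIter E α σ t) v) atTop
      (𝓝 (rhoR E (alphaR α rstar) v)) :=
    ((continuous_rhoR hfinOut hfinIn hout hin).tendsto _).comp hstate
  have hrv : Tendsto (fun t => rvec E α σ t v) atTop (𝓝 (rstar v)) := hr.apply_nhds v
  have hstep : Tendsto (fun t => rvec E α σ (t + 1) v - rvec E α σ t v) atTop (𝓝 0) := by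
    simpa only [sub_self] using ((tendsto_add_atTop_iff_nat 1).2 hrv).sub hrv
  have hvisit : ∃ᶠ t in atTop,
      rhoR E (raiseIter E α σ t) v = 2 * (rvec E α σ (t + 1) v - rvec E α σ t v) := by
    refine hσ.mono fun t ht => ?_
    rw [rvec_succ, ht, Pi.add_apply, Pi.single_eq_same]
    ring
  simpa only [mul_zero] using tendsto_nhds_unique_of_frequently_eq hrho (hstep.const_mul 2) hvisit

end Limit

theorem height_local_smoothing_general [DecidableEq V] (E : V → V → Prop)
    (hfinOut : ∀ v, {w | E v w}.Finite) (hfinIn : ∀ v, {u | E u v}.Finite)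
    (hout : ∀ v, ∃ w, E v w) (hin : ∀ v, ∃ u, E u v)
    (α : V → V → ℝ) (σ : ℕ → V) (rstar : V → ℝ) (hr : Tendsto (rvec E α σ) atTop (𝓝 rstar))
    (v : V) (hσ : ∃ᶠ t in atTop, σ t = v) (hv : 0 < rhoR E α v) :
    ∃ u w, E u v ∧ E v w ∧
      height rstar v + rhoR E α v / 2 ≤ (height rstar u + height rstar w) / 2 := by
  obtain ⟨w, hvw, hw⟩ := (isGreatest_outMax α (hfinOut v) (hout v)).1
  obtain ⟨u, huv, hu⟩ := (isGreatest_inMax (alphaR α rstar) (hfinIn v) (hin v)).1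
  have hzero : rhoR E (alphaR α rstar) v = 0 :=
    rhoR_alphaR_eq_zero_of_tendsto_rvec (hfinOut v) (hfinIn v) (hout v) (hin v) hσ hr
  have hin_le : α u v ≤ inMax E α v :=
    (isGreatest_inMax α (hfinIn v) (hin v)).2 ⟨u, huv, rfl⟩
  have hlimit : alphaR α rstar v w ≤ alphaR α rstar u v :=
    calc
      alphaR α rstar v w ≤ outMax E (alphaR α rstar) v :=
        (isGreatest_outMax _ (hfinOut v) (hout v)).2 ⟨w, hvw, rfl⟩
      _ ≤ inMax E (alphaR α rstar) v := sub_nonpos.1 (max_eq_left_iff.1 hzero)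
      _ = alphaR α rstar u v := hu
  refine ⟨u, w, huv, hvw, ?_⟩
  rw [rhoR_eq_sub_of_pos hv, hw]
  simp only [alphaR] at hlimit
  simp only [height]
  linarith

/-- If `ρ_v^R > 0` then there are edges `(u,v)` and `(v,w)` with
`y_v + ρ_v^R/2 ≤ (y_u + y_w)/2`. -/
theorem height_local_smoothing
    [Fintype V] [Nonempty V] [DecidableEq V] (E : V → V → Prop)
    (hout : ∀ v, ∃ w, E v w) (hin : ∀ v, ∃ u, E u v)
    (hconn : ∀ u v : V, Relation.ReflTransGen E u v)
    (α : V → V → ℝ) (rstar : V → ℝ)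
    (hrstar : ∀ σ : ℕ → V, Fair σ → ∀ v,
      Tendsto (fun t => rvec E α σ t v) atTop (nhds (rstar v)))
    (v : V) (hv : 0 < rhoR E α v) :
    ∃ u w, E u v ∧ E v w ∧
      height rstar v + rhoR E α v / 2 ≤
        (height rstar u + height rstar w) / 2 := by
  obtain ⟨σ, hσ⟩ := exists_fair (V := V)
  exact height_local_smoothing_general E (fun _ => Set.toFinite _) (fun _ => Set.toFinite _)
    hout hin α σ rstar (tendsto_pi_nhds.2 (hrstar σ hσ)) v (frequently_atTop.2 (hσ v)) hv
end
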